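/- arXiv:2308.09429 — 3 statements merged into one kernel-verified Lean document; each statement's English description precedes it below -/
import Mathlib

section
/- Let q₁ and q₂ be nonsingular quadratic forms on finite-dimensional 𝔽₂-vector spaces V₁ and V₂ respectively. Then there exists a linear isomorphism φ : V₁ → V₂ with q₂(φ(x)) = q₁(x) for all x ∈ V₁ if and only if dim V₁ = dim V₂ and S(q₁) = S(q₂) (i.e. the two forms have the same dimension and the same Arf invariant). -/
/-- The bilinear form `B(x,y) = q(x+y) + q(x) + q(y)` associated to `q : V → 𝔽₂`. -/
def assocBilin {V : Type*} [AddCommGroup V] (q : V → ZMod 2) (x y : V) : ZMod 2 :=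
  q (x + y) + q x + q y

/-- `q` is a quadratic form if its associated form `B` is bilinear. -/
def IsQuadraticForm {V : Type*} [AddCommGroup V] (q : V → ZMod 2) : Prop :=
  ∀ x x' y : V, assocBilin q (x + x') y = assocBilin q x y + assocBilin q x' y

/-- `q` is nonsingular if the radical of its associated bilinear form is trivial. -/
def IsNonsingularQF {V : Type*} [AddCommGroup V] (q : V → ZMod 2) : Prop :=
  ∀ x : V, (∀ y : V, assocBilin q x y = 0) → x = 0

/-- The Gauss sum `S(q) = Σ_{x ∈ V} (-1)^{q(x)}`. -/
def gaussSumQ {V : Type*} [Fintype V] (q : V → ZMod 2) : ℤ :=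
  ∑ x : V, if q x = 0 then 1 else -1

/-!
If `e` is a nonzero vector with `q e = 0`, nonsingularity provides a partner `f` with `q f = 0` and
`B e f = 1`, so `q` splits as the hyperbolic plane `a * b` plus a nonsingular form on `{e, f}ᗮ`.
Gauss sums are multiplicative and the hyperbolic plane has Gauss sum `2`, so such planes can be
cancelled simultaneously from two forms with equal dimension and Gauss sum. The Gauss sum counts
the zeros of `q`, hence in a given dimension it also detects whether such an `e` exists. When it
does not, both forms take the value `1` at every nonzero vector, and every linear isomorphism is an
isometry.
-/

open QuadraticMap

section HyperbolicPair

variable {R M : Type*} [CommRing R] [AddCommGroup M] [Module R M]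

/-- The hyperbolic plane: the quadratic form `(a, b) ↦ a * b` on `R × R`. -/
def hyperbolicPlane (R : Type*) [CommRing R] : QuadraticForm R (R × R) :=
  linMulLin (LinearMap.fst R R R) (LinearMap.snd R R R)

@[simp]
lemma hyperbolicPlane_apply (p : R × R) : hyperbolicPlane R p = p.1 * p.2 := rfl

/-- A hyperbolic pair of `Q`: two isotropic vectors whose polar pairing is `1`. Such a pair spans
a copy of the hyperbolic plane. -/
structure IsHyperbolicPair (Q : QuadraticForm R M) (e f : M) : Prop where
  map_left : Q e = 0
  map_right : Q f = 0
  polar_eq_one : polar Q e f = 1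

/-- The orthogonal complement `{e, f}ᗮ` with respect to the polar form of `Q`. -/
def pairOrthogonal (Q : QuadraticForm R M) (e f : M) : Submodule R M :=
  LinearMap.ker (Q.polarBilin e) ⊓ LinearMap.ker (Q.polarBilin f)

lemma mem_pairOrthogonal {Q : QuadraticForm R M} {e f v : M} :
    v ∈ pairOrthogonal Q e f ↔ polar Q e v = 0 ∧ polar Q f v = 0 := Iff.rfl

namespace IsHyperbolicPair

variable {Q : QuadraticForm R M} {e f : M}

lemma polar_symm_eq_one (h : IsHyperbolicPair Q e f) : polar Q f e = 1 := by
  rw [polar_comm, h.polar_eq_one]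

lemma polar_left_self (h : IsHyperbolicPair Q e f) : polar Q e e = 0 := by
  rw [polar_self, h.map_left, smul_zero]

lemma polar_right_self (h : IsHyperbolicPair Q e f) : polar Q f f = 0 := by
  rw [polar_self, h.map_right, smul_zero]

lemma polar_left_combination (h : IsHyperbolicPair Q e f) (a b : R)
    {w : M} (hw : w ∈ pairOrthogonal Q e f) : polar Q e (a • e + b • f + w) = b := by
  simp [polar_add_right, polar_smul_right, h.polar_left_self, h.polar_eq_one,
    (mem_pairOrthogonal.1 hw).1]

lemma polar_right_combination (h : IsHyperbolicPair Q e f) (a b : R)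
    {w : M} (hw : w ∈ pairOrthogonal Q e f) : polar Q f (a • e + b • f + w) = a := by
  simp [polar_add_right, polar_smul_right, h.polar_right_self, h.polar_symm_eq_one,
    (mem_pairOrthogonal.1 hw).2]

lemma sub_mem_pairOrthogonal (h : IsHyperbolicPair Q e f) (v : M) :
    v - (polar Q f v • e + polar Q e v • f) ∈ pairOrthogonal Q e f := by
  simp [mem_pairOrthogonal, polar_sub_right, polar_add_right, polar_smul_right, h.polar_eq_one,
    h.polar_symm_eq_one, h.polar_left_self, h.polar_right_self]

lemma map_combination (h : IsHyperbolicPair Q e f) (a b : R)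
    {w : M} (hw : w ∈ pairOrthogonal Q e f) : Q (a • e + b • f + w) = a * b + Q w := by
  obtain ⟨hew, hfw⟩ := mem_pairOrthogonal.1 hw
  simp [QuadraticMap.map_add Q, QuadraticMap.map_smul, polar_add_left, polar_smul_left,
    polar_smul_right, h.map_left, h.map_right, h.polar_eq_one, hew, hfw, mul_comm]

/-- The orthogonal splitting of `Q` determined by a hyperbolic pair `e, f`: the isometry
`((a, b), w) ↦ a • e + b • f + w`. -/
def isometryEquiv (h : IsHyperbolicPair Q e f) :
    ((hyperbolicPlane R).prod (Q.restrict (pairOrthogonal Q e f))).IsometryEquiv Q where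
  toLinearMap := ((LinearMap.toSpanSingleton R M e).coprod
    (LinearMap.toSpanSingleton R M f)).coprod (pairOrthogonal Q e f).subtype
  invFun v := ((polar Q f v, polar Q e v), ⟨_, h.sub_mem_pairOrthogonal v⟩)
  left_inv := by
    rintro ⟨⟨a, b⟩, w, hw⟩
    simp [h.polar_left_combination a b hw, h.polar_right_combination a b hw]
  right_inv v := by simp
  map_app' := by
    rintro ⟨⟨a, b⟩, w, hw⟩
    simp [h.map_combination a b hw]

end IsHyperbolicPair

end HyperbolicPair

section Nonsingular

variable {R M₁ M₂ : Type*} [CommRing R] [AddCommGroup M₁] [Module R M₁]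
  [AddCommGroup M₂] [Module R M₂]

lemma separatingLeft_polarBilin_of_equivalent {Q₁ : QuadraticForm R M₁} {Q₂ : QuadraticForm R M₂}
    (h : Q₁.Equivalent Q₂) (hQ₁ : Q₁.polarBilin.SeparatingLeft) :
    Q₂.polarBilin.SeparatingLeft := by
  obtain ⟨φ⟩ := h
  have polar_map (x y : M₁) : polar Q₂ (φ x) (φ y) = polar Q₁ x y := by
    simp only [polar, ← map_add, φ.map_app]
  intro v hv
  obtain ⟨x, rfl⟩ := φ.toLinearEquiv.surjective v
  have hx : x = 0 := hQ₁ x fun y ↦ (polar_map x y).symm.trans (hv (φ y))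
  rw [hx, map_zero]

lemma separatingLeft_polarBilin_right_of_prod {Q₁ : QuadraticForm R M₁} {Q₂ : QuadraticForm R M₂}
    (h : (Q₁.prod Q₂).polarBilin.SeparatingLeft) : Q₂.polarBilin.SeparatingLeft := by
  intro w hw
  have hw' : ((0, w) : M₁ × M₂) = 0 := h _ fun p ↦ by simpa using hw p.2
  exact congrArg Prod.snd hw'

variable {K V : Type*} [Field K] [AddCommGroup V] [Module K V] {Q : QuadraticForm K V}

lemma exists_isHyperbolicPair (hQ : Q.polarBilin.SeparatingLeft) {e : V} (he : e ≠ 0)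
    (hQe : Q e = 0) : ∃ f, IsHyperbolicPair Q e f := by
  obtain ⟨g, hg⟩ : ∃ g, polar Q e g ≠ 0 := by
    by_contra! h
    exact he (hQ e h)
  obtain ⟨f, hef⟩ : ∃ f, polar Q e f = 1 :=
    ⟨(polar Q e g)⁻¹ • g, by rw [polar_smul_right, smul_eq_mul, inv_mul_cancel₀ hg]⟩
  -- Subtracting a multiple of `e` keeps the pairing with `e` and makes the second vector isotropic.
  refine ⟨f - Q f • e, hQe, ?_, ?_⟩
  · simp [sub_eq_add_neg, ← neg_smul, QuadraticMap.map_add Q, QuadraticMap.map_smul,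
      polar_smul_right, polar_comm Q f e, hef, hQe]
  · simp [polar_sub_right, polar_smul_right, hQe, hef]

theorem exists_equivalent_hyperbolicPlane_prod (hQ : Q.polarBilin.SeparatingLeft)
    (hiso : ¬ Q.Anisotropic) :
    ∃ W : Submodule K V, ((hyperbolicPlane K).prod (Q.restrict W)).Equivalent Q ∧
      (Q.restrict W).polarBilin.SeparatingLeft := by
  obtain ⟨e, he, hQe⟩ := (not_anisotropic_iff_exists Q).1 hiso
  obtain ⟨f, hef⟩ := exists_isHyperbolicPair hQ he hQe
  have hequiv : ((hyperbolicPlane K).prod (Q.restrict (pairOrthogonal Q e f))).Equivalent Q :=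
    ⟨hef.isometryEquiv⟩
  exact ⟨_, hequiv, separatingLeft_polarBilin_right_of_prod
    (separatingLeft_polarBilin_of_equivalent hequiv.symm hQ)⟩

end Nonsingular

section GaussSum

lemma gaussSumQ_congr {α β : Type*} [Fintype α] [Fintype β] {q : α → ZMod 2} {r : β → ZMod 2}
    (φ : α ≃ β) (h : ∀ x, r (φ x) = q x) : gaussSumQ q = gaussSumQ r :=
  Fintype.sum_equiv φ _ _ fun x ↦ by rw [h]

lemma gaussSumQ_prod {α β : Type*} [Fintype α] [Fintype β] (q : α → ZMod 2) (r : β → ZMod 2) :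
    gaussSumQ (fun p : α × β ↦ q p.1 + r p.2) = gaussSumQ q * gaussSumQ r := by
  have sign_add : ∀ a b : ZMod 2, (if a + b = 0 then 1 else -1 : ℤ) =
      (if a = 0 then 1 else -1) * (if b = 0 then 1 else -1) := by decide
  simp only [gaussSumQ, sign_add, Fintype.sum_mul_sum, Fintype.sum_prod_type]

lemma gaussSumQ_hyperbolicPlane : gaussSumQ (hyperbolicPlane (ZMod 2)) = 2 := by
  decide

lemma gaussSumQ_eq_two_mul_card_sub_card {α : Type*} [Fintype α] (q : α → ZMod 2) :
    gaussSumQ q = 2 * (Finset.univ.filter fun x ↦ q x = 0).card - Fintype.card α := by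
  have sign_eq (x : α) : (if q x = 0 then 1 else -1 : ℤ) = 2 * (if q x = 0 then 1 else 0) - 1 := by
    split_ifs <;> norm_num
  simp only [gaussSumQ, sign_eq, Finset.sum_sub_distrib, ← Finset.mul_sum]
  simp

variable {V W : Type*} [AddCommGroup V] [Module (ZMod 2) V] [Fintype V]
  [AddCommGroup W] [Module (ZMod 2) W] [Fintype W]

lemma gaussSumQ_of_hyperbolicPlane_prod_equivalent {Q : QuadraticForm (ZMod 2) V}
    {P : QuadraticForm (ZMod 2) W} (h : ((hyperbolicPlane (ZMod 2)).prod P).Equivalent Q) :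
    gaussSumQ Q = 2 * gaussSumQ P := by
  obtain ⟨φ⟩ := h
  rw [← gaussSumQ_congr φ.toEquiv φ.map_app, ← gaussSumQ_hyperbolicPlane]
  exact gaussSumQ_prod (hyperbolicPlane (ZMod 2)) P

lemma anisotropic_iff_gaussSumQ_eq (Q : QuadraticForm (ZMod 2) V) :
    Q.Anisotropic ↔ gaussSumQ Q = 2 - Fintype.card V := by
  have card_zeros : Q.Anisotropic ↔ (Finset.univ.filter fun x ↦ Q x = 0).card = 1 := by
    rw [Finset.card_eq_one_iff_existsUnique]
    simp only [Finset.mem_filter_univ]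
    exact ⟨fun h ↦ ⟨0, map_zero Q, h⟩, fun h x hx ↦ h.unique hx (map_zero Q)⟩
  rw [card_zeros, gaussSumQ_eq_two_mul_card_sub_card]
  omega

end GaussSum

section Classification

lemma equivalent_of_anisotropic {V₁ V₂ : Type*} [AddCommGroup V₁] [Module (ZMod 2) V₁]
    [AddCommGroup V₂] [Module (ZMod 2) V₂] {Q₁ : QuadraticForm (ZMod 2) V₁}
    {Q₂ : QuadraticForm (ZMod 2) V₂} (h₁ : Q₁.Anisotropic) (h₂ : Q₂.Anisotropic)
    (φ : V₁ ≃ₗ[ZMod 2] V₂) : Q₁.Equivalent Q₂ := by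
  refine ⟨φ, fun x ↦ ?_⟩
  change Q₂ (φ x) = Q₁ x
  rcases eq_or_ne x 0 with rfl | hx
  · simp
  · have map_eq_one₁ : Q₁ x = 1 := Fin.eq_one_of_ne_zero _ (mt (h₁ x) hx)
    have map_eq_one₂ : Q₂ (φ x) = 1 :=
      Fin.eq_one_of_ne_zero _ (mt (h₂ (φ x)) (φ.map_ne_zero_iff.2 hx))
    rw [map_eq_one₁, map_eq_one₂]

lemma finrank_of_hyperbolicPlane_prod_equivalent {R M N : Type*} [CommRing R] [Nontrivial R]
    [AddCommGroup M] [Module R M] [AddCommGroup N] [Module R N] [Module.Free R N]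
    [Module.Finite R N] {Q : QuadraticForm R M} {P : QuadraticForm R N}
    (h : ((hyperbolicPlane R).prod P).Equivalent Q) :
    Module.finrank R M = 2 + Module.finrank R N := by
  obtain ⟨φ⟩ := h
  simp [← φ.toLinearEquiv.finrank_eq]

theorem equivalent_of_finrank_eq_of_gaussSumQ_eq {V₁ V₂ : Type*}
    [AddCommGroup V₁] [Module (ZMod 2) V₁] [Fintype V₁]
    [AddCommGroup V₂] [Module (ZMod 2) V₂] [Fintype V₂]
    {Q₁ : QuadraticForm (ZMod 2) V₁} (hQ₁ : Q₁.polarBilin.SeparatingLeft)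
    {Q₂ : QuadraticForm (ZMod 2) V₂} (hQ₂ : Q₂.polarBilin.SeparatingLeft)
    (hdim : Module.finrank (ZMod 2) V₁ = Module.finrank (ZMod 2) V₂)
    (hgauss : gaussSumQ Q₁ = gaussSumQ Q₂) : Q₁.Equivalent Q₂ := by
  induction hn : Module.finrank (ZMod 2) V₁ using Nat.strong_induction_on generalizing V₁ V₂ with
  | _ n ih =>
  let ψ : V₁ ≃ₗ[ZMod 2] V₂ := LinearEquiv.ofFinrankEq V₁ V₂ hdim
  have aniso_iff : Q₁.Anisotropic ↔ Q₂.Anisotropic := by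
    rw [anisotropic_iff_gaussSumQ_eq, anisotropic_iff_gaussSumQ_eq, hgauss,
      Fintype.card_congr ψ.toEquiv]
  by_cases haniso : Q₁.Anisotropic
  · exact equivalent_of_anisotropic haniso (aniso_iff.1 haniso) ψ
  obtain ⟨W₁, split₁, hW₁⟩ := exists_equivalent_hyperbolicPlane_prod hQ₁ haniso
  obtain ⟨W₂, split₂, hW₂⟩ := exists_equivalent_hyperbolicPlane_prod hQ₂ (mt aniso_iff.2 haniso)
  have : Fintype W₁ := Fintype.ofFinite W₁
  have : Fintype W₂ := Fintype.ofFinite W₂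
  have dim₁ := finrank_of_hyperbolicPlane_prod_equivalent split₁
  have dim₂ := finrank_of_hyperbolicPlane_prod_equivalent split₂
  have gauss₁ := gaussSumQ_of_hyperbolicPlane_prod_equivalent split₁
  have gauss₂ := gaussSumQ_of_hyperbolicPlane_prod_equivalent split₂
  have hW : (Q₁.restrict W₁).Equivalent (Q₂.restrict W₂) :=
    ih _ (by omega) hW₁ hW₂ (by omega) (by omega) rfl
  exact split₁.symm.trans (((Equivalent.refl _).prod hW).trans split₂)

end Classification

section AssociatedForm

variable {V : Type*} [AddCommGroup V] {q : V → ZMod 2}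

lemma assocBilin_eq_polar (q : V → ZMod 2) : assocBilin q = polar q := by
  ext x y
  simp only [assocBilin, polar, CharTwo.sub_eq_add]

namespace IsQuadraticForm

lemma polar_add_left (hq : IsQuadraticForm q) (x x' y : V) :
    polar q (x + x') y = polar q x y + polar q x' y := by
  simpa only [assocBilin_eq_polar] using hq x x' y

lemma apply_zero (hq : IsQuadraticForm q) : q 0 = 0 := by
  simpa [polar] using hq.polar_add_left 0 0 0

variable [Module (ZMod 2) V]

/-- A quadratic form in the sense of `IsQuadraticForm`, bundled as a `QuadraticForm`. Homogeneity is
automatic because the only scalars are `0` and `1`. -/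
def toQuadraticForm (hq : IsQuadraticForm q) : QuadraticForm (ZMod 2) V :=
  ofPolar q
    (fun a x ↦ by
      obtain rfl | rfl : a = 0 ∨ a = 1 := by revert a; decide
      · simp [hq.apply_zero]
      · simp)
    hq.polar_add_left
    (fun a x y ↦ map_smul
      ((AddMonoidHom.mk' (polar q · y) (hq.polar_add_left · · y)).toZModLinearMap 2) a x)

lemma separatingLeft_polarBilin (hq : IsQuadraticForm q) (hns : IsNonsingularQF q) :
    hq.toQuadraticForm.polarBilin.SeparatingLeft := by
  intro x hx
  refine hns x fun y ↦ ?_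
  rw [assocBilin_eq_polar]
  exact hx y

end IsQuadraticForm

end AssociatedForm

/-- Arf's classification: two nonsingular quadratic forms over `𝔽₂` are isomorphic
if and only if they have the same dimension and the same Arf invariant (encoded here
by the Gauss sum). -/
theorem stmt2 {V₁ V₂ : Type*}
    [AddCommGroup V₁] [Module (ZMod 2) V₁] [Fintype V₁]
    [AddCommGroup V₂] [Module (ZMod 2) V₂] [Fintype V₂]
    (q₁ : V₁ → ZMod 2) (hq₁ : IsQuadraticForm q₁) (hns₁ : IsNonsingularQF q₁)
    (q₂ : V₂ → ZMod 2) (hq₂ : IsQuadraticForm q₂) (hns₂ : IsNonsingularQF q₂) :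
    (∃ φ : V₁ ≃ₗ[ZMod 2] V₂, ∀ x : V₁, q₂ (φ x) = q₁ x) ↔
      (Module.finrank (ZMod 2) V₁ = Module.finrank (ZMod 2) V₂ ∧
        gaussSumQ q₁ = gaussSumQ q₂) := by
  constructor
  · rintro ⟨φ, hφ⟩
    exact ⟨φ.finrank_eq, gaussSumQ_congr φ.toEquiv hφ⟩
  · rintro ⟨hdim, hgauss⟩
    obtain ⟨φ⟩ : hq₁.toQuadraticForm.Equivalent hq₂.toQuadraticForm :=
      equivalent_of_finrank_eq_of_gaussSumQ_eq (hq₁.separatingLeft_polarBilin hns₁)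
        (hq₂.separatingLeft_polarBilin hns₂) hdim hgauss
    exact ⟨φ.toLinearEquiv, φ.map_app⟩
end

section
/- Let V be a finite-dimensional vector space over 𝔽₂ and q : V → 𝔽₂ a quadratic form with associated bilinear form B. If q(z) = 0 for every z ∈ rad(B), then the Gauss sum satisfies S(q)² = 2^{dim V + dim rad(B)}; in particular S(q) ≠ 0. -/
theorem assocBilin_zero_left {V : Type*} [AddCommGroup V] (q : V → ZMod 2)
    (hq : IsQuadraticForm q) (y : V) : assocBilin q 0 y = 0 := by
  have h := hq 0 0 y
  rw [add_zero] at h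
  have h2 : ∀ a : ZMod 2, a + a = 0 := by decide
  exact h.trans (h2 _)

/-- The radical of the bilinear form associated to a quadratic form `q`, as a submodule. -/
def qRadical {V : Type*} [AddCommGroup V] [Module (ZMod 2) V]
    (q : V → ZMod 2) (hq : IsQuadraticForm q) : Submodule (ZMod 2) V where
  carrier := {x | ∀ y, assocBilin q x y = 0}
  add_mem' := by
    intro a b ha hb
    simp only [Set.mem_setOf_eq] at *
    intro y
    rw [hq a b y, ha y, hb y, add_zero]
  zero_mem' := by
    simp only [Set.mem_setOf_eq]
    exact assocBilin_zero_left q hq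
  smul_mem' := by
    intro c x hx
    simp only [Set.mem_setOf_eq] at *
    have hc : c = 0 ∨ c = 1 := by revert c; decide
    rcases hc with rfl | rfl
    · rw [zero_smul]; exact assocBilin_zero_left q hq
    · rw [one_smul]; exact hx

/-!
Write `χ(a) = (-1)^a`. Substituting `x = z + y` in `S(q)² = ∑_{x,y} χ(q x + q y)` and using
`q (z + y) + q y = q z + B(z, y)` gives `S(q)² = ∑_z χ(q z) ∑_y χ(B(z, y))`. The inner sum runs over
the values of a character of `V`, so it is `|V|` if `z ∈ rad B` and `0` otherwise. What remains is
`|V| ∑_{z ∈ rad B} χ(q z)`, which is `|V| · |rad B|` when `q` vanishes on the radical.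
-/

/-- The character `a ↦ (-1)^a` of `𝔽₂` with values in `ℤ`, which turns Gauss sums over `𝔽₂` into
sums of additive characters. -/
def signChar : AddChar (ZMod 2) ℤ := AddChar.zmodChar 2 (ζ := -1) (by norm_num)

theorem signChar_apply (a : ZMod 2) : signChar a = if a = 0 then 1 else -1 := by
  revert a
  decide

theorem signChar_eq_one_iff {a : ZMod 2} : signChar a = 1 ↔ a = 0 := by
  revert a
  decide

theorem gaussSumQ_eq_sum_signChar {V : Type*} [Fintype V] (q : V → ZMod 2) :
    gaussSumQ q = ∑ x, signChar (q x) := by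
  simp only [gaussSumQ, signChar_apply]

section AddCommGroup

variable {V : Type*} [AddCommGroup V] {q : V → ZMod 2}

theorem assocBilin_comm (q : V → ZMod 2) (x y : V) : assocBilin q x y = assocBilin q y x := by
  rw [assocBilin, assocBilin, add_comm x y, add_right_comm]

theorem signChar_map_add_mul_signChar (q : V → ZMod 2) (z y : V) :
    signChar (q (z + y)) * signChar (q y) = signChar (q z) * signChar (assocBilin q z y) := by
  have polarization : q (z + y) + q y = q z + assocBilin q z y := by
    rw [assocBilin]
    linear_combination -CharTwo.add_self_eq_zero (q z)
  rw [← AddChar.map_add_eq_mul, ← AddChar.map_add_eq_mul, polarization]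

theorem IsQuadraticForm.assocBilin_add_right (hq : IsQuadraticForm q) (z x y : V) :
    assocBilin q z (x + y) = assocBilin q z x + assocBilin q z y := by
  simpa only [assocBilin_comm q z] using hq x y z

/-- The linear functional `B(z, ·)` attached to a vector `z`, as an additive homomorphism. -/
def IsQuadraticForm.assocBilinHom (hq : IsQuadraticForm q) (z : V) : V →+ ZMod 2 :=
  AddMonoidHom.mk' (assocBilin q z) (hq.assocBilin_add_right z)

theorem IsQuadraticForm.signChar_comp_assocBilinHom_eq_zero_iff (hq : IsQuadraticForm q) {z : V} :
    signChar.compAddMonoidHom (hq.assocBilinHom z) = 0 ↔ ∀ y, assocBilin q z y = 0 :=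
  DFunLike.ext_iff.trans (forall_congr' fun _ ↦ signChar_eq_one_iff)

variable [Fintype V]

theorem gaussSumQ_sq_eq_sum_mul_sum (q : V → ZMod 2) :
    gaussSumQ q ^ 2 = ∑ z, signChar (q z) * ∑ y, signChar (assocBilin q z y) :=
  calc gaussSumQ q ^ 2
      = ∑ y, ∑ x, signChar (q x) * signChar (q y) := by
        rw [gaussSumQ_eq_sum_signChar, sq, Finset.sum_mul_sum, Finset.sum_comm]
    _ = ∑ y, ∑ z, signChar (q (z + y)) * signChar (q y) :=
        Finset.sum_congr rfl fun y _ ↦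
          (Equiv.sum_comp (Equiv.addRight y) fun x ↦ signChar (q x) * signChar (q y)).symm
    _ = ∑ z, signChar (q z) * ∑ y, signChar (assocBilin q z y) := by
        rw [Finset.sum_comm]
        simp only [signChar_map_add_mul_signChar, Finset.mul_sum]

theorem IsQuadraticForm.sum_signChar_assocBilin (hq : IsQuadraticForm q) (z : V) :
    ∑ y, signChar (assocBilin q z y) =
      if ∀ y, assocBilin q z y = 0 then (Fintype.card V : ℤ) else 0 := by
  classical
  exact (signChar.compAddMonoidHom (hq.assocBilinHom z)).sum_eq_ite.trans
    (if_congr hq.signChar_comp_assocBilinHom_eq_zero_iff rfl rfl)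

theorem IsQuadraticForm.gaussSumQ_sq (hq : IsQuadraticForm q) :
    gaussSumQ q ^ 2 = Fintype.card V * ∑ z with ∀ y, assocBilin q z y = 0, signChar (q z) := by
  simp only [gaussSumQ_sq_eq_sum_mul_sum, hq.sum_signChar_assocBilin, mul_ite, mul_zero]
  rw [← Finset.sum_filter, ← Finset.sum_mul, mul_comm]

end AddCommGroup

section Module

variable {V : Type*} [AddCommGroup V] [Module (ZMod 2) V] [Fintype V] {q : V → ZMod 2}

theorem IsQuadraticForm.card_filter_assocBilin_eq_zero (hq : IsQuadraticForm q) :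
    Finset.card {z : V | ∀ y, assocBilin q z y = 0} = Nat.card (qRadical q hq) :=
  (Nat.subtype_card _ fun _ ↦ Finset.mem_filter_univ _).symm

theorem IsQuadraticForm.gaussSumQ_sq_eq_card_mul_card_qRadical (hq : IsQuadraticForm q)
    (hvan : ∀ z : V, (∀ y : V, assocBilin q z y = 0) → q z = 0) :
    gaussSumQ q ^ 2 = Nat.card V * Nat.card (qRadical q hq) := by
  have radical_sum : ∑ z with ∀ y, assocBilin q z y = 0, signChar (q z) =
      Nat.card (qRadical q hq) := by
    rw [← hq.card_filter_assocBilin_eq_zero, Finset.cast_card]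
    exact Finset.sum_congr rfl fun z hz ↦
      signChar_eq_one_iff.2 (hvan z ((Finset.mem_filter_univ z).1 hz))
  rw [hq.gaussSumQ_sq, radical_sum, Fintype.card_eq_nat_card]

end Module

/-- If a quadratic form `q` vanishes on the radical of its associated bilinear form, then
`S(q)² = 2^{dim V + dim rad(B)}`; in particular `S(q) ≠ 0`. -/
theorem stmt4 {V : Type*} [AddCommGroup V] [Module (ZMod 2) V] [Fintype V]
    (q : V → ZMod 2) (hq : IsQuadraticForm q)
    (hvan : ∀ z : V, (∀ y : V, assocBilin q z y = 0) → q z = 0) :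
    (gaussSumQ q) ^ 2
        = 2 ^ (Module.finrank (ZMod 2) V + Module.finrank (ZMod 2) (qRadical q hq)) ∧
      gaussSumQ q ≠ 0 := by
  have gaussSum_sq : gaussSumQ q ^ 2 =
      2 ^ (Module.finrank (ZMod 2) V + Module.finrank (ZMod 2) (qRadical q hq)) := by
    rw [hq.gaussSumQ_sq_eq_card_mul_card_qRadical hvan, ← FiniteField.pow_finrank_eq_natCard 2 V,
      ← FiniteField.pow_finrank_eq_natCard 2 (qRadical q hq), pow_add]
    norm_cast
  refine ⟨gaussSum_sq, ?_⟩
  rw [← sq_pos_iff, gaussSum_sq]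
  positivity
end

section
/- Let m ≥ 1 and let E be a finite set of sign vectors ε ∈ Bool^m with |E| even. Then there exists a map s : {1, …, m} → Bool (a partition of the indices into two subsets) such that for all indices j, k with s(j) = s(k), the number #{ε ∈ E : ε_j = ε_k} is even. -/
/-!
Put `j` and `k` into the same class when `#{ε ∈ E : ε_j}` and `#{ε ∈ E : ε_k}` have the same
parity. This works because `#{ε ∈ E : ε_j = ε_k}` is congruent modulo two to
`#E + #{ε ∈ E : ε_j} + #{ε ∈ E : ε_k}`.
-/

section

variable {α : Type*} (E : Finset α) (f g : α → Bool)

theorem card_filter_eq_add_card_filter_add_card_filter :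
    (E.filter fun a => f a = g a).card + (E.filter fun a => f a).card +
        (E.filter fun a => g a).card =
      E.card + 2 * (E.filter fun a => f a && g a).card := by
  simp only [Finset.card_filter, Finset.card_eq_sum_ones E, Finset.mul_sum,
    ← Finset.sum_add_distrib]
  refine Finset.sum_congr rfl fun a _ => ?_
  cases f a <;> cases g a <;> rfl

variable {E}

theorem even_card_filter_eq_iff (hE : Even E.card) :
    Even (E.filter fun a => f a = g a).card ↔
      (Even (E.filter fun a => f a).card ↔ Even (E.filter fun a => g a).card) := by
  have even_total : Even ((E.filter fun a => f a = g a).card + (E.filter fun a => f a).card +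
      (E.filter fun a => g a).card) := by
    rw [card_filter_eq_add_card_filter_add_card_filter]
    exact hE.add (even_two_mul _)
  simp only [Nat.even_add] at even_total
  tauto

end

theorem stmt15_general {ι α : Type*} (E : Finset α) (hE : Even E.card) (x : ι → α → Bool) :
    ∃ s : ι → Bool, ∀ j k : ι, s j = s k → Even (E.filter fun a => x j a = x k a).card :=
  ⟨fun j => decide (Even (E.filter fun a => x j a).card), fun j k hs =>
    (even_card_filter_eq_iff (x j) (x k) hE).2 (decide_eq_decide.1 hs)⟩

/-- For a finite set `E` of sign vectors in `Bool^m` of even cardinality, there is a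
partition of the colors `{1, …, m}` into two subsets (given by `s : Fin m → Bool`) such
that `#{ε ∈ E : ε_j = ε_k}` is even whenever `j` and `k` lie in the same subset. -/
theorem stmt15 (m : ℕ) (hm : 1 ≤ m) (E : Finset (Fin m → Bool)) (hE : Even E.card) :
    ∃ s : Fin m → Bool, ∀ j k : Fin m, s j = s k →
      Even (E.filter (fun ε => ε j = ε k)).card :=
  stmt15_general E hE fun j ε => ε j
end
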